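/- Let n ≥ 1 and m ≥ 1, let t be a rational number with 1/3 ≤ t < 1/2 such that n' := 3n/(1 − 2t) is an integer, let χ : Fin (3n) → Fin 3 be a map each of whose three fibers has exactly n elements, and let e : Fin m → Finset (Fin (3n)) be an injective family such that each e(j) has exactly 3 elements, one in each fiber of χ. Define the table T : Fin n' → Fin m → ℕ by: for rows i < 3n, T(i)(j) = 0 if i ∈ e(j) and T(i)(j) = i + 1 otherwise; for rows 3n ≤ i < n', T(i)(j) = i + 1 for all j. Define SA : Fin n' → Fin 4 by SA(i) = χ(i) for i < 3n and SA(i) = 3 for i ≥ 3n. Let d be the metric on Fin 4 with d(i,i) = 0, d(i,j) = 1 for distinct i, j ∈ {0,1,2}, and d(i,3) = d(3,i) = 1/2 for i ∈ {0,1,2}. Then the following are equivalent: (1) there exists M ⊆ Fin m with |M| = n such that the union of e(j) over j ∈ M equals all of Fin (3n); (2) there exists a partition P of the rows Fin n' such that every block B of P satisfies EMD_d(P(B), P(Fin n')) ≤ t and cost(P) ≤ 3n·(m − 1). -/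

import Mathlib

open Finset

attribute [local instance] Classical.propDecidable

noncomputable def EMD {s : ℕ} (d : Fin s → Fin s → ℝ) (X Y : Fin s → ℝ) : ℝ :=
  sInf { c : ℝ | ∃ f : Fin s → Fin s → ℝ,
    (∀ i j, 0 ≤ f i j) ∧ (∀ i, ∑ j, f i j = X i) ∧ (∀ j, ∑ i, f i j = Y j) ∧
    c = ∑ i, ∑ j, d i j * f i j }

/-- The metric on `Fin 4` with distance 1 between distinct points of `{0,1,2}`
and distance 1/2 between `3` and each of `0,1,2`. -/
noncomputable def d4 : Fin 4 → Fin 4 → ℝ := fun i j =>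
  if i = j then 0 else if i = 3 ∨ j = 3 then 1/2 else 1

/-- The SA distribution of a set `B` of rows, given a sensitive-attribute map `SA`. -/
noncomputable def SAdist {n s : ℕ} (SA : Fin n → Fin s) (B : Finset (Fin n)) :
    Fin s → ℝ :=
  fun i => ((B.filter (fun r => SA r = i)).card : ℝ) / B.card

/-- The suppression cost of a set `B` of rows of table `T`. -/
noncomputable def suppCost {n : ℕ} {ι α : Type*} [Fintype ι]
    (T : Fin n → ι → α) (B : Finset (Fin n)) : ℕ :=
  B.card *
    (Finset.univ.filter (fun j : ι => ¬ ∀ i ∈ B, ∀ i' ∈ B, T i j = T i' j)).card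

/-- `P` is a partition of the rows `Fin n`. -/
def IsRowPartition {n : ℕ} (P : Finset (Finset (Fin n))) : Prop :=
  (∀ B ∈ P, B.Nonempty) ∧
  (∀ B ∈ P, ∀ B' ∈ P, B ≠ B' → Disjoint B B') ∧
  (∀ i : Fin n, ∃ B ∈ P, i ∈ B)

/-- The cost of a partition: the sum of the suppression costs of its blocks. -/
noncomputable def partCost {n : ℕ} {ι α : Type*} [Fintype ι]
    (T : Fin n → ι → α) (P : Finset (Finset (Fin n))) : ℕ :=
  ∑ B ∈ P, suppCost T B

/-!
The global distribution is the mixture of weight `1 - 2 * t` on the colours and `2 * t` on the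
padding value. A block of item rows that misses a colour `v` is too far from it: the potential
that is `0` at `v`, `1 / 2` at the padding value and `1` elsewhere shows that its distance to a
distribution `Y` is at least `Y v + Y last / 2`, which exceeds `t` for the global distribution.
Hence a block without padding has at least as many rows as there are colours. Rows of a larger
block that agree in column `j` all lie in `e j`, so a block that meets the items has at most one
column left unsuppressed, and it has one only if it is exactly `e j`. Each item row is thus
charged at least `m - 1`, and the cost bound can be met only if every block that meets the items
is one of the `e j`, that is, by an exact cover.

Conversely, the sets of an exact cover, completed by singleton padding blocks, meet the cost
bound: the sets of the cover are at distance at most `t` from the global distribution and the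
padding rows at distance at most `(1 - 2 * t) / 2`, which is at most `t` since `1 / 4 ≤ t`.
-/

section EarthMover

variable {s : ℕ} {d : Fin s → Fin s → ℝ} {X Y Z : Fin s → ℝ}

/-- `f` is a transport plan from `X` to `Y`: these are the flows over which `EMD d X Y` takes the
infimum of the transport cost. -/
def IsTransportPlan (f : Fin s → Fin s → ℝ) (X Y : Fin s → ℝ) : Prop :=
  (∀ i j, 0 ≤ f i j) ∧ (∀ i, ∑ j, f i j = X i) ∧ ∀ j, ∑ i, f i j = Y j

lemma isTransportPlan_mul (hX : X ∈ stdSimplex ℝ (Fin s)) (hY : Y ∈ stdSimplex ℝ (Fin s)) :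
    IsTransportPlan (fun i j => X i * Y j) X Y := by
  refine ⟨fun i j => mul_nonneg (hX.1 i) (hY.1 j), fun i => ?_, fun j => ?_⟩
  · rw [← mul_sum, hY.2, mul_one]
  · rw [← sum_mul, hX.2, one_mul]

lemma isTransportPlan_diagonal (hX : ∀ i, 0 ≤ X i) :
    IsTransportPlan (fun i j => if i = j then X i else 0) X X :=
  ⟨fun i j => by dsimp only; split_ifs <;> simp [hX], fun i => by simp, fun j => by simp⟩

lemma IsTransportPlan.mix {f g : Fin s → Fin s → ℝ} (hf : IsTransportPlan f X Y)
    (hg : IsTransportPlan g X Z) {c : ℝ} (hc₀ : 0 ≤ c) (hc₁ : c ≤ 1) :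
    IsTransportPlan (fun i j => (1 - c) * f i j + c * g i j) X ((1 - c) • Y + c • Z) := by
  refine ⟨fun i j => ?_, fun i => ?_, fun j => ?_⟩
  · exact add_nonneg (mul_nonneg (sub_nonneg.2 hc₁) (hf.1 i j)) (mul_nonneg hc₀ (hg.1 i j))
  · rw [sum_add_distrib, ← mul_sum, ← mul_sum, hf.2.1, hg.2.1]
    ring
  · rw [sum_add_distrib, ← mul_sum, ← mul_sum, hf.2.2, hg.2.2]
    rfl

lemma EMD_le_of_isTransportPlan (hd : ∀ i j, 0 ≤ d i j) {f : Fin s → Fin s → ℝ}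
    (hf : IsTransportPlan f X Y) : EMD d X Y ≤ ∑ i, ∑ j, d i j * f i j := by
  refine csInf_le ⟨0, ?_⟩ ⟨f, hf.1, hf.2.1, hf.2.2, rfl⟩
  rintro _ ⟨g, hg, -, -, rfl⟩
  exact sum_nonneg fun i _ => sum_nonneg fun j _ => mul_nonneg (hd i j) (hg i j)

lemma EMD_mix_le (hd : ∀ i j, 0 ≤ d i j) (hd₀ : ∀ i, d i i = 0)
    (hX : X ∈ stdSimplex ℝ (Fin s)) (hZ : Z ∈ stdSimplex ℝ (Fin s))
    {c : ℝ} (hc₀ : 0 ≤ c) (hc₁ : c ≤ 1) :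
    EMD d X ((1 - c) • X + c • Z) ≤ c * ∑ i, ∑ j, d i j * (X i * Z j) := by
  refine (EMD_le_of_isTransportPlan hd <|
    (isTransportPlan_diagonal hX.1).mix (isTransportPlan_mul hX hZ) hc₀ hc₁).trans_eq ?_
  simp only [mul_sum]
  refine sum_congr rfl fun i _ => sum_congr rfl fun j _ => ?_
  split_ifs with hij
  · rw [hij, hd₀]
    ring
  · ring

/-- The easy half of Kantorovich duality. -/
lemma sum_mul_sub_sum_mul_le_EMD (hX : X ∈ stdSimplex ℝ (Fin s)) (hY : Y ∈ stdSimplex ℝ (Fin s))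
    {p : Fin s → ℝ} (hp : ∀ i j, p i - p j ≤ d i j) :
    ∑ i, p i * X i - ∑ j, p j * Y j ≤ EMD d X Y := by
  have hplan := isTransportPlan_mul hX hY
  refine le_csInf ⟨_, _, hplan.1, hplan.2.1, hplan.2.2, rfl⟩ ?_
  rintro _ ⟨f, hf, hfX, hfY, rfl⟩
  calc ∑ i, p i * X i - ∑ j, p j * Y j
      = ∑ i, ∑ j, (p i - p j) * f i j := by
        simp only [← hfX, ← hfY, mul_sum, sub_mul, sum_sub_distrib]
        rw [sum_comm (f := fun j i => p j * f i j)]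
    _ ≤ ∑ i, ∑ j, d i j * f i j :=
        sum_le_sum fun i _ => sum_le_sum fun j _ => mul_le_mul_of_nonneg_right (hp i j) (hf i j)

end EarthMover

section StarMetric

variable {k : ℕ} {X Y : Fin (k + 1) → ℝ}

/-- The metric `d4` for `k` colours instead of three: distinct colours `Fin.castSucc v` are at
distance `1`, and the extra value `Fin.last k` is at distance `1 / 2` from each of them. -/
noncomputable def starDist (k : ℕ) : Fin (k + 1) → Fin (k + 1) → ℝ := fun i j =>
  if i = j then 0 else if i = Fin.last k ∨ j = Fin.last k then 1 / 2 else 1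

lemma starDist_nonneg (i j : Fin (k + 1)) : 0 ≤ starDist k i j := by
  unfold starDist
  split_ifs <;> norm_num

lemma starDist_self (i : Fin (k + 1)) : starDist k i i = 0 := if_pos rfl

lemma starDist_comm (i j : Fin (k + 1)) : starDist k i j = starDist k j i := by
  simp only [starDist, eq_comm (a := i) (b := j), or_comm]

lemma sum_starDist_last_mul (hX : X ∈ stdSimplex ℝ (Fin (k + 1))) :
    ∑ i, starDist k (Fin.last k) i * X i = (1 - X (Fin.last k)) / 2 := by
  have hsum := hX.2
  rw [Fin.sum_univ_castSucc] at hsum ⊢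
  have hcolour (v : Fin k) : starDist k (Fin.last k) v.castSucc = 1 / 2 := by
    simp [starDist, (Fin.castSucc_lt_last v).ne']
  simp only [hcolour, starDist_self, ← mul_sum]
  linarith

lemma EMD_starDist_single_last_le (hY : Y ∈ stdSimplex ℝ (Fin (k + 1))) :
    EMD (starDist k) (Pi.single (Fin.last k) 1) Y ≤ (1 - Y (Fin.last k)) / 2 := by
  refine (EMD_le_of_isTransportPlan starDist_nonneg <|
    isTransportPlan_mul (single_mem_stdSimplex ℝ _) hY).trans_eq ?_
  rw [← sum_starDist_last_mul hY, Fintype.sum_eq_single (Fin.last k)]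
  · simp
  · intro i hi
    simp [hi]

lemma EMD_starDist_mix_single_last_le (hX : X ∈ stdSimplex ℝ (Fin (k + 1))) {c : ℝ}
    (hc₀ : 0 ≤ c) (hc₁ : c ≤ 1) :
    EMD (starDist k) X ((1 - c) • X + c • Pi.single (Fin.last k) 1) ≤
      c * ((1 - X (Fin.last k)) / 2) := by
  refine (EMD_mix_le starDist_nonneg starDist_self hX (single_mem_stdSimplex ℝ _)
    hc₀ hc₁).trans_eq ?_
  rw [← sum_starDist_last_mul hX]
  congr 1
  refine sum_congr rfl fun i _ => ?_
  simp [Pi.single_apply, starDist_comm i]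

lemma sub_add_sub_half_le_EMD_starDist (hX : X ∈ stdSimplex ℝ (Fin (k + 1)))
    (hY : Y ∈ stdSimplex ℝ (Fin (k + 1))) (v : Fin k) :
    (Y v.castSucc - X v.castSucc) + (Y (Fin.last k) - X (Fin.last k)) / 2 ≤
      EMD (starDist k) X Y := by
  let p : Fin (k + 1) → ℝ := fun i =>
    1 - (if i = v.castSucc then 1 else 0) - (if i = Fin.last k then 1 / 2 else 0)
  have hp (i j : Fin (k + 1)) : p i - p j ≤ starDist k i j := by
    have hv : v.castSucc ≠ Fin.last k := (Fin.castSucc_lt_last v).ne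
    simp only [p, starDist]
    split_ifs <;> first | norm_num; done | grind
  have hsum {W : Fin (k + 1) → ℝ} (hW : W ∈ stdSimplex ℝ (Fin (k + 1))) :
      ∑ i, p i * W i = 1 - W v.castSucc - W (Fin.last k) / 2 := by
    simp [p, sub_mul, hW.2]
    ring
  have hle := sum_mul_sub_sum_mul_le_EMD hX hY hp
  rw [hsum hX, hsum hY] at hle
  linarith

end StarMetric

section SADistribution

variable {n s : ℕ}

lemma SAdist_mem_stdSimplex (SA : Fin n → Fin s) {B : Finset (Fin n)} (hB : B.Nonempty) :
    SAdist SA B ∈ stdSimplex ℝ (Fin s) := by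
  refine ⟨fun i => by unfold SAdist; positivity, ?_⟩
  have hB₀ : (#B : ℝ) ≠ 0 := by exact_mod_cast hB.card_pos.ne'
  unfold SAdist
  rw [← sum_div, ← Nat.cast_sum, ← card_eq_sum_card_fiberwise fun _ _ => mem_coe.2 (mem_univ _),
    div_self hB₀]

lemma SAdist_singleton (SA : Fin n → Fin s) (r : Fin n) :
    SAdist SA {r} = Pi.single (SA r) 1 := by
  ext i
  by_cases h : SA r = i
  · simp [SAdist, filter_singleton, h]
  · simp [SAdist, filter_singleton, h]

end SADistribution

section Suppression

variable {n : ℕ} {ι α : Type*} [Fintype ι]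

/-- The columns in which all rows of `B` agree, that is, those that need not be suppressed. -/
noncomputable def agreeCols (T : Fin n → ι → α) (B : Finset (Fin n)) : Finset ι :=
  {j | ∀ i ∈ B, ∀ i' ∈ B, T i j = T i' j}

lemma suppCost_eq (T : Fin n → ι → α) (B : Finset (Fin n)) :
    suppCost T B = #B * (Fintype.card ι - #(agreeCols T B)) := by
  rw [suppCost, agreeCols, ← card_compl, compl_filter]

lemma suppCost_singleton (T : Fin n → ι → α) (r : Fin n) : suppCost T {r} = 0 := by
  simp [suppCost]

end Suppression

section ExactCover

lemma pairwiseDisjoint_of_sum_card_le {ι α : Type*} [DecidableEq α] {e : ι → Finset α}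
    {M : Finset ι} (h : ∑ j ∈ M, #(e j) ≤ #(M.biUnion e)) : (M : Set ι).PairwiseDisjoint e := by
  intro a ha b hb hab
  have hunion : #(e a ∪ (M.erase a).biUnion e) = #(e a) + #((M.erase a).biUnion e) := by
    refine (card_union_le _ _).antisymm ?_
    calc #(e a) + #((M.erase a).biUnion e)
        ≤ #(e a) + ∑ j ∈ M.erase a, #(e j) := by gcongr; exact card_biUnion_le
      _ = ∑ j ∈ M, #(e j) := add_sum_erase M (fun j => #(e j)) ha
      _ ≤ #(M.biUnion e) := h
      _ = #(e a ∪ (M.erase a).biUnion e) := by rw [← biUnion_insert, insert_erase ha]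
  exact (card_union_eq_card_add_card.1 hunion).mono_right
    (subset_biUnion_of_mem e (mem_erase.2 ⟨hab.symm, hb⟩))

variable {ι α : Type*} [Fintype α] [DecidableEq α] {e : ι → Finset α} {M : Finset ι}

/-- The sets `e j`, `j ∈ M`, partition the ground set `α`. -/
def IsExactCover (e : ι → Finset α) (M : Finset ι) : Prop :=
  (M : Set ι).PairwiseDisjoint e ∧ M.biUnion e = univ

lemma IsExactCover.sum_card_inter (hM : IsExactCover e M) (S : Finset α) :
    ∑ j ∈ M, #(e j ∩ S) = #S := by
  rw [← card_biUnion fun i hi j hj hij =>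
    (hM.1 hi hj hij).mono inter_subset_left inter_subset_left, ← biUnion_inter, hM.2, univ_inter]

lemma isExactCover_iff_card_eq {k n : ℕ} (hk : 0 < k) (hα : Fintype.card α = k * n)
    (he : ∀ j, #(e j) = k) : IsExactCover e M ↔ #M = n ∧ M.biUnion e = univ := by
  have hsum : ∑ j ∈ M, #(e j) = k * #M := by
    rw [sum_congr rfl fun j _ => he j, sum_const, smul_eq_mul, mul_comm]
  refine ⟨fun hM => ⟨?_, hM.2⟩, fun ⟨hcard, hcov⟩ => ⟨?_, hcov⟩⟩
  · have hcount := hM.sum_card_inter univ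
    simp only [inter_univ, hsum, card_univ, hα] at hcount
    exact Nat.eq_of_mul_eq_mul_left hk hcount
  · apply pairwiseDisjoint_of_sum_card_le
    rw [hsum, hcov, card_univ, hα, hcard]

lemma IsRowPartition.isExactCover {n : ℕ} {P : Finset (Finset (Fin n))} (hP : IsRowPartition P) :
    IsExactCover id P := by
  refine ⟨fun B hB B' hB' hne => hP.2.1 B hB B' hB' hne, eq_univ_of_forall fun i => ?_⟩
  simpa only [mem_biUnion, id] using hP.2.2 i

end ExactCover

section Reduction

variable {N n' k m : ℕ}

/-- The sensitive attribute of the reduction: an item row `i < N` carries its colour `χ i`, and the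
padding rows carry the extra value `Fin.last k`. -/
noncomputable def itemSA (n' : ℕ) (χ : Fin N → Fin k) : Fin n' → Fin (k + 1) := fun i =>
  if h : (i : ℕ) < N then (χ ⟨i, h⟩).castSucc else Fin.last k

/-- The table of the reduction: item row `i` has the shared entry `0` in the columns of the sets
containing `i`; the entries `i + 1` occur in row `i` only. -/
noncomputable def coverTable (n' : ℕ) (e : Fin m → Finset (Fin N)) :
    Fin n' → Fin m → ℕ := fun i j =>
  if h : (i : ℕ) < N then (if (⟨i, h⟩ : Fin N) ∈ e j then 0 else i + 1) else i + 1

/-- The rows of the reduction that correspond to a set of items. -/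
def itemRows (hle : N ≤ n') (A : Finset (Fin N)) : Finset (Fin n') :=
  A.map (Fin.castLEEmb hle)

variable {hle : N ≤ n'} {A : Finset (Fin N)} {B : Finset (Fin n')}

lemma mem_itemRows {i : Fin n'} : i ∈ itemRows hle A ↔ ∃ h : (i : ℕ) < N, ⟨i, h⟩ ∈ A := by
  simp only [itemRows, mem_map, Fin.castLEEmb_apply]
  exact ⟨by rintro ⟨a, ha, rfl⟩; exact ⟨a.2, ha⟩, fun ⟨h, ha⟩ => ⟨⟨i, h⟩, ha, rfl⟩⟩

lemma mem_itemRows_univ {i : Fin n'} : i ∈ itemRows hle univ ↔ (i : ℕ) < N := by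
  simp [mem_itemRows]

lemma card_itemRows : #(itemRows hle A) = #A := card_map _

lemma itemRows_inter (A A' : Finset (Fin N)) :
    itemRows hle A ∩ itemRows hle A' = itemRows hle (A ∩ A') :=
  (map_inter _ _).symm

lemma itemRows_subset_univ : itemRows hle A ⊆ itemRows hle univ :=
  map_subset_map.2 (subset_univ A)

lemma itemRows_injective : Function.Injective (itemRows hle) := map_injective _

lemma disjoint_itemRows {A A' : Finset (Fin N)} :
    Disjoint (itemRows hle A) (itemRows hle A') ↔ Disjoint A A' :=
  disjoint_map _

section Colours

variable {χ : Fin N → Fin k}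

lemma SAdist_itemSA_castSucc (v : Fin k) :
    SAdist (itemSA n' χ) B v.castSucc = (#(B ∩ itemRows hle {i | χ i = v}) : ℝ) / #B := by
  have hrows : B.filter (fun r => itemSA n' χ r = v.castSucc) = B ∩ itemRows hle {i | χ i = v} := by
    ext r
    rw [mem_filter]
    simp only [mem_inter, mem_itemRows, mem_filter_univ, itemSA]
    split_ifs with hr <;> simp [hr, (Fin.castSucc_lt_last v).ne']
  rw [SAdist, hrows]

lemma SAdist_itemSA_last :
    SAdist (itemSA n' χ) B (Fin.last k) = (#(B \ itemRows hle univ) : ℝ) / #B := by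
  have hrows : B.filter (fun r => itemSA n' χ r = Fin.last k) = B \ itemRows hle univ := by
    ext r
    rw [mem_filter]
    simp only [mem_sdiff, mem_itemRows_univ, itemSA]
    split_ifs with hr <;> simp [hr, (Fin.castSucc_lt_last _).ne]
  rw [SAdist, hrows]

lemma SAdist_itemSA_univ_last (hle : N ≤ n') (hn' : 0 < n') :
    SAdist (itemSA n' χ) univ (Fin.last k) = 1 - (N : ℝ) / n' := by
  have hn'₀ : (n' : ℝ) ≠ 0 := by exact_mod_cast hn'.ne'
  rw [SAdist_itemSA_last (hle := hle), card_sdiff_of_subset (subset_univ _), card_itemRows,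
    card_univ, card_univ, Fintype.card_fin, Fintype.card_fin, Nat.cast_sub hle, sub_div,
    div_self hn'₀]

lemma SAdist_itemSA_itemRows_castSucc (v : Fin k) :
    SAdist (itemSA n' χ) (itemRows hle A) v.castSucc = SAdist χ A v := by
  rw [SAdist_itemSA_castSucc (hle := hle), itemRows_inter, card_itemRows, card_itemRows, SAdist,
    inter_filter, inter_univ]

lemma SAdist_itemSA_itemRows_last : SAdist (itemSA n' χ) (itemRows hle A) (Fin.last k) = 0 := by
  rw [SAdist_itemSA_last (hle := hle), sdiff_eq_empty_iff_subset.2 itemRows_subset_univ, card_empty,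
    Nat.cast_zero, zero_div]

lemma SAdist_itemSA_univ_eq_mix (hle : N ≤ n') (hN : 0 < N) (hA : SAdist χ A = SAdist χ univ) :
    SAdist (itemSA n' χ) univ =
      ((N : ℝ) / n') • SAdist (itemSA n' χ) (itemRows hle A) +
        (1 - (N : ℝ) / n') • Pi.single (Fin.last k) 1 := by
  ext i
  refine Fin.lastCases ?_ (fun v => ?_) i
  · simp [SAdist_itemSA_univ_last hle (hN.trans_le hle), SAdist_itemSA_itemRows_last]
  · have hcolour : SAdist (itemSA n' χ) univ v.castSucc = (N : ℝ) / n' * SAdist χ univ v := by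
      rw [SAdist_itemSA_castSucc (hle := hle), univ_inter, card_itemRows, SAdist, card_univ,
        card_univ, Fintype.card_fin, Fintype.card_fin]
      field_simp
    simp [hcolour, SAdist_itemSA_itemRows_castSucc, hA, (Fin.castSucc_lt_last v).ne]

lemma EMD_itemRows_le (hle : N ≤ n') (hA₀ : A.Nonempty)
    (hA : SAdist χ A = SAdist χ univ) :
    EMD (starDist k) (SAdist (itemSA n' χ) (itemRows hle A))
      (SAdist (itemSA n' χ) univ) ≤ (1 - (N : ℝ) / n') / 2 := by
  have hratio : (N : ℝ) / n' ≤ 1 := div_le_one_of_le₀ (by exact_mod_cast hle) n'.cast_nonneg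
  have hN : 0 < N := by simpa using hA₀.card_pos.trans_le (card_le_univ A)
  have hB : (itemRows hle A).Nonempty := hA₀.map
  have hmix := EMD_starDist_mix_single_last_le (SAdist_mem_stdSimplex (itemSA n' χ) hB)
    (sub_nonneg.2 hratio) (sub_le_self 1 (by positivity))
  rw [sub_sub_cancel, ← SAdist_itemSA_univ_eq_mix hle hN hA, SAdist_itemSA_itemRows_last] at hmix
  linarith

lemma EMD_padding_le (hle : N ≤ n') {r : Fin n'} (hr : ¬ (r : ℕ) < N) :
    EMD (starDist k) (SAdist (itemSA n' χ) {r}) (SAdist (itemSA n' χ) univ) ≤ (N : ℝ) / n' / 2 := by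
  have hmem := SAdist_mem_stdSimplex (itemSA n' χ) ⟨r, mem_univ r⟩
  have hle' := EMD_starDist_single_last_le hmem
  rw [SAdist_itemSA_univ_last hle r.pos, sub_sub_cancel] at hle'
  rwa [SAdist_singleton, itemSA, dif_neg hr]

lemma castSucc_mem_image_itemSA (hχ : Function.Surjective χ) (hB₀ : B.Nonempty)
    (hB : B ⊆ itemRows hle univ)
    (hEMD : EMD (starDist k) (SAdist (itemSA n' χ) B) (SAdist (itemSA n' χ) univ) ≤
      (1 - (N : ℝ) / n') / 2) (v : Fin k) : v.castSucc ∈ B.image (itemSA n' χ) := by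
  by_contra hmiss
  have hn' : 0 < n' := hB₀.choose.pos
  have hv : SAdist (itemSA n' χ) B v.castSucc = 0 := by
    simp_all [SAdist]
  have hlast : SAdist (itemSA n' χ) B (Fin.last k) = 0 := by
    rw [SAdist_itemSA_last (hle := hle), sdiff_eq_empty_iff_subset.2 hB, card_empty, Nat.cast_zero,
      zero_div]
  have hglobal : 0 < SAdist (itemSA n' χ) univ v.castSucc := by
    obtain ⟨a, ha⟩ := hχ v
    have hfiber : 0 < #{i | χ i = v} := card_pos.2 ⟨a, by simpa using ha⟩
    rw [SAdist_itemSA_castSucc (hle := hle), univ_inter, card_itemRows, card_univ, Fintype.card_fin]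
    positivity
  have hbound := sub_add_sub_half_le_EMD_starDist (SAdist_mem_stdSimplex (itemSA n' χ) hB₀)
    (SAdist_mem_stdSimplex (itemSA n' χ) (hB₀.mono (subset_univ B))) v
  rw [hv, hlast, SAdist_itemSA_univ_last hle hn'] at hbound
  linarith

lemma le_card_of_EMD_le (hχ : Function.Surjective χ) (hB₀ : B.Nonempty)
    (hB : B ⊆ itemRows hle univ)
    (hEMD : EMD (starDist k) (SAdist (itemSA n' χ) B) (SAdist (itemSA n' χ) univ) ≤
      (1 - (N : ℝ) / n') / 2) : k ≤ #B := by
  have hcolours : univ.map Fin.castSuccEmb ⊆ B.image (itemSA n' χ) := fun i hi => by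
    obtain ⟨v, -, rfl⟩ := mem_map.1 hi
    exact castSucc_mem_image_itemSA hχ hB₀ hB hEMD v
  simpa using (card_le_card hcolours).trans card_image_le

end Colours

section Columns

variable {e : Fin m → Finset (Fin N)} {j : Fin m}

lemma coverTable_apply (i : Fin n') (j : Fin m) :
    coverTable n' e i j = if i ∈ itemRows hle (e j) then 0 else (i : ℕ) + 1 := by
  unfold coverTable
  split_ifs <;> simp_all [mem_itemRows]

lemma mem_agreeCols_coverTable :
    j ∈ agreeCols (coverTable n' e) B ↔
      B ⊆ itemRows hle (e j) ∨ (B : Set (Fin n')).Subsingleton := by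
  simp only [agreeCols, mem_filter, mem_univ, true_and, coverTable_apply (hle := hle)]
  refine ⟨fun hagree => or_iff_not_imp_left.2 fun hsub => ?_, ?_⟩
  · obtain ⟨x, hx, hxj⟩ := not_subset.1 hsub
    have heq (y : Fin n') (hy : y ∈ B) : y = x := by
      have hyx := hagree y hy x hx
      rw [if_neg hxj] at hyx
      split_ifs at hyx
      exact Fin.ext (Nat.succ_injective hyx)
    exact fun y hy z hz => (heq y hy).trans (heq z hz).symm
  · rintro (hsub | hsub) i hi i' hi'
    · rw [if_pos (hsub hi), if_pos (hsub hi')]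
    · rw [hsub hi hi']

lemma suppCost_itemRows_le (hle : N ≤ n') (e : Fin m → Finset (Fin N)) (j : Fin m) :
    suppCost (coverTable n' e) (itemRows hle (e j)) ≤ #(itemRows hle (e j)) * (m - 1) := by
  have hj : j ∈ agreeCols (coverTable n' e) (itemRows hle (e j)) :=
    (mem_agreeCols_coverTable (hle := hle)).2 (.inl Subset.rfl)
  rw [suppCost_eq, Fintype.card_fin]
  gcongr
  exact card_pos.2 ⟨j, hj⟩

variable (hk : 2 ≤ k) (he : ∀ j, #(e j) = k) (hB : B ⊆ itemRows hle univ → k ≤ #B)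
  (hmeet : (B ∩ itemRows hle univ).Nonempty)

include hk he hB hmeet

lemma eq_itemRows_of_mem_agreeCols (hj : j ∈ agreeCols (coverTable n' e) B) :
    B = itemRows hle (e j) := by
  rcases (mem_agreeCols_coverTable (hle := hle)).1 hj with hsub | hsub
  · refine eq_of_subset_of_card_le hsub ?_
    rw [card_itemRows, he]
    exact hB (hsub.trans itemRows_subset_univ)
  · obtain ⟨x, hx⟩ := hmeet
    rw [mem_inter] at hx
    have hitem : B ⊆ itemRows hle univ := fun y hy => hsub hy hx.1 ▸ hx.2
    have hone : #B ≤ 1 := card_le_one.2 fun y hy z hz => hsub hy hz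
    have := hB hitem
    omega

lemma card_mul_le_suppCost (hinj : Function.Injective e) :
    #B * (m - 1) ≤ suppCost (coverTable n' e) B := by
  have hone : #(agreeCols (coverTable n' e) B) ≤ 1 := card_le_one.2 fun i hi j hj =>
    hinj <| itemRows_injective <|
      (eq_itemRows_of_mem_agreeCols hk he hB hmeet hi).symm.trans
        (eq_itemRows_of_mem_agreeCols hk he hB hmeet hj)
  rw [suppCost_eq, Fintype.card_fin]
  gcongr

lemma exists_eq_itemRows_of_suppCost_le (hm : 1 ≤ m)
    (hcost : suppCost (coverTable n' e) B ≤ #B * (m - 1)) : ∃ j, B = itemRows hle (e j) := by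
  suffices hcols : (agreeCols (coverTable n' e) B).Nonempty by
    obtain ⟨j, hj⟩ := hcols
    exact ⟨j, eq_itemRows_of_mem_agreeCols hk he hB hmeet hj⟩
  by_contra hcols
  rw [suppCost_eq, Fintype.card_fin, not_nonempty_iff_eq_empty.1 hcols, card_empty] at hcost
  have hpos : 0 < #B := (hmeet.mono inter_subset_left).card_pos
  have := Nat.le_of_mul_le_mul_left hcost hpos
  omega

end Columns

section CoverOfPartition

variable {e : Fin m → Finset (Fin N)} {P : Finset (Finset (Fin n'))}
  (hk : 2 ≤ k) (he : ∀ j, #(e j) = k) (hinj : Function.Injective e) (hP : IsRowPartition P)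
  (hPk : ∀ B ∈ P, B ⊆ itemRows hle univ → k ≤ #B) (hm : 1 ≤ m)
  (hcost : partCost (coverTable n' e) P ≤ N * (m - 1))

include hk he hinj hP hPk hm hcost

lemma exists_eq_itemRows_of_partCost_le {B : Finset (Fin n')} (hBP : B ∈ P)
    (hmeet : (B ∩ itemRows hle univ).Nonempty) : ∃ j, B = itemRows hle (e j) := by
  have hlower : ∀ C ∈ P, #(C ∩ itemRows hle univ) * (m - 1) ≤ suppCost (coverTable n' e) C := by
    intro C hC
    rcases (C ∩ itemRows hle univ).eq_empty_or_nonempty with hempty | hne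
    · simp [hempty]
    · exact (Nat.mul_le_mul_right _ (card_le_card inter_subset_left)).trans
        (card_mul_le_suppCost hk he (hPk C hC) hne hinj)
  have hitems : ∑ C ∈ P, #(C ∩ itemRows hle univ) = N := by
    simpa [card_itemRows] using hP.isExactCover.sum_card_inter (itemRows hle univ)
  have htotal : ∑ C ∈ P, #(C ∩ itemRows hle univ) * (m - 1) =
      ∑ C ∈ P, suppCost (coverTable n' e) C := by
    refine (sum_le_sum hlower).antisymm ?_
    rwa [← sum_mul, hitems]
  refine exists_eq_itemRows_of_suppCost_le hk he (hPk B hBP) hmeet hm ?_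
  rw [← (sum_eq_sum_iff_of_le hlower).1 htotal B hBP]
  exact Nat.mul_le_mul_right _ (card_le_card inter_subset_left)

lemma isExactCover_of_partCost_le :
    IsExactCover e (univ.filter fun j => itemRows hle (e j) ∈ P) := by
  refine ⟨fun i hi j hj hij => ?_, eq_univ_of_forall fun a => ?_⟩
  · exact disjoint_itemRows.1 <| hP.2.1 _ (mem_filter.1 hi).2 _ (mem_filter.1 hj).2
      ((itemRows_injective.comp hinj).ne hij)
  · obtain ⟨B, hB, ha⟩ := hP.2.2 (a.castLE hle)
    have hitem : a.castLE hle ∈ itemRows hle univ := mem_itemRows_univ.2 a.2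
    obtain ⟨j, rfl⟩ := exists_eq_itemRows_of_partCost_le hk he hinj hP hPk hm hcost hB
      ⟨_, mem_inter.2 ⟨ha, hitem⟩⟩
    obtain ⟨_, haj⟩ := mem_itemRows.1 ha
    exact mem_biUnion.2 ⟨j, mem_filter.2 ⟨mem_univ j, hB⟩, haj⟩

end CoverOfPartition

section PartitionOfCover

variable {e : Fin m → Finset (Fin N)} {M : Finset (Fin m)}

/-- The partition of the rows induced by a cover: one block for each set of `M`, while every padding
row is a block of its own. -/
noncomputable def coverPartition (hle : N ≤ n') (e : Fin m → Finset (Fin N))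
    (M : Finset (Fin m)) : Finset (Finset (Fin n')) :=
  M.image (fun j => itemRows hle (e j)) ∪ (itemRows hle univ)ᶜ.image singleton

lemma mem_coverPartition : B ∈ coverPartition hle e M ↔
    (∃ j ∈ M, itemRows hle (e j) = B) ∨ ∃ r : Fin n', ¬ (r : ℕ) < N ∧ {r} = B := by
  simp only [coverPartition, mem_union, mem_image, mem_compl, mem_itemRows_univ]

lemma IsExactCover.isRowPartition_coverPartition (hM : IsExactCover e M) (hle : N ≤ n')
    (he : ∀ j, (e j).Nonempty) : IsRowPartition (coverPartition hle e M) := by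
  have hpadding {r : Fin n'} (hr : ¬ (r : ℕ) < N) (j : Fin m) : r ∉ itemRows hle (e j) :=
    fun hrj => hr (mem_itemRows_univ.1 (itemRows_subset_univ hrj))
  refine ⟨fun B hB => ?_, fun B hB B' hB' hne => ?_, fun i => ?_⟩
  · rcases mem_coverPartition.1 hB with ⟨j, -, rfl⟩ | ⟨r, -, rfl⟩
    · exact (he j).map
    · exact singleton_nonempty r
  · rcases mem_coverPartition.1 hB with ⟨j, hj, rfl⟩ | ⟨r, hr, rfl⟩ <;>
      rcases mem_coverPartition.1 hB' with ⟨j', hj', rfl⟩ | ⟨r', hr', rfl⟩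
    · exact disjoint_itemRows.2 (hM.1 hj hj' fun hjj' => hne (by rw [hjj']))
    · exact disjoint_singleton_right.2 (hpadding hr' j)
    · exact disjoint_singleton_left.2 (hpadding hr j')
    · exact disjoint_singleton.2 fun hrr' => hne (by rw [hrr'])
  · by_cases hi : (i : ℕ) < N
    · obtain ⟨j, hj, hij⟩ := mem_biUnion.1 (hM.2.symm ▸ mem_univ (⟨i, hi⟩ : Fin N))
      exact ⟨_, mem_coverPartition.2 (.inl ⟨j, hj, rfl⟩), mem_itemRows.2 ⟨hi, hij⟩⟩
    · exact ⟨_, mem_coverPartition.2 (.inr ⟨i, hi, rfl⟩), mem_singleton_self i⟩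

lemma partCost_coverPartition_le (hP : IsRowPartition (coverPartition hle e M)) :
    partCost (coverTable n' e) (coverPartition hle e M) ≤ N * (m - 1) := by
  calc partCost (coverTable n' e) (coverPartition hle e M)
      ≤ ∑ B ∈ coverPartition hle e M, #(B ∩ itemRows hle univ) * (m - 1) := by
        refine sum_le_sum fun B hB => ?_
        rcases mem_coverPartition.1 hB with ⟨j, -, rfl⟩ | ⟨r, -, rfl⟩
        · rw [inter_eq_left.2 itemRows_subset_univ]
          exact suppCost_itemRows_le hle e j
        · simp [suppCost_singleton]
    _ = #(itemRows hle univ) * (m - 1) := by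
        rw [← sum_mul]
        exact congrArg (· * (m - 1)) (hP.isExactCover.sum_card_inter _)
    _ = N * (m - 1) := by rw [card_itemRows, card_univ, Fintype.card_fin]

end PartitionOfCover

section Equivalence

variable {χ : Fin N → Fin k} {e : Fin m → Finset (Fin N)}

lemma card_eq_of_card_fiber_eq_one (hA : ∀ v, #{i ∈ A | χ i = v} = 1) : #A = k := by
  rw [card_eq_sum_card_fiberwise (f := χ) (t := univ) fun _ _ => mem_coe.2 (mem_univ _)]
  simp [hA]

lemma IsExactCover.SAdist_eq_SAdist_univ {M : Finset (Fin m)} (hM : IsExactCover e M)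
    (hfib : ∀ j v, #{i ∈ e j | χ i = v} = 1) {j : Fin m} (hj : j ∈ M) :
    SAdist χ (e j) = SAdist χ univ := by
  have hM₀ : (#M : ℝ) ≠ 0 := by exact_mod_cast (card_pos.2 ⟨j, hj⟩).ne'
  have hcount (v : Fin k) : #{i | χ i = v} = #M := by
    rw [← hM.sum_card_inter]
    simp [inter_filter, hfib]
  have htotal : #(univ : Finset (Fin N)) = #M * k := by
    rw [← hM.sum_card_inter]
    simp [card_eq_of_card_fiber_eq_one (hfib _)]
  ext v
  rw [SAdist, SAdist, hfib, hcount, htotal, card_eq_of_card_fiber_eq_one (hfib j)]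
  push_cast
  field_simp

theorem exists_isExactCover_iff {t : ℝ} (hle : N ≤ n') (hratio : (N : ℝ) / n' = 1 - 2 * t)
    (ht : 1 / 4 ≤ t) (hk : 2 ≤ k) (hm : 1 ≤ m) (hinj : Function.Injective e)
    (hfib : ∀ j v, #{i ∈ e j | χ i = v} = 1) :
    (∃ M, IsExactCover e M) ↔ ∃ P : Finset (Finset (Fin n')), IsRowPartition P ∧
      (∀ B ∈ P, EMD (starDist k) (SAdist (itemSA n' χ) B) (SAdist (itemSA n' χ) univ) ≤ t) ∧
      partCost (coverTable n' e) P ≤ N * (m - 1) := by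
  have he (j : Fin m) : #(e j) = k := card_eq_of_card_fiber_eq_one (hfib j)
  have hne (j : Fin m) : (e j).Nonempty := card_pos.1 (by rw [he]; omega)
  have hthreshold : (1 - (N : ℝ) / n') / 2 = t := by rw [hratio]; ring
  constructor
  · rintro ⟨M, hM⟩
    have hP := hM.isRowPartition_coverPartition hle hne
    refine ⟨_, hP, fun B hB => ?_, partCost_coverPartition_le hP⟩
    rcases mem_coverPartition.1 hB with ⟨j, hj, rfl⟩ | ⟨r, hr, rfl⟩
    · exact (EMD_itemRows_le hle (hne j) (hM.SAdist_eq_SAdist_univ hfib hj)).trans_eq hthreshold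
    · refine (EMD_padding_le hle hr).trans ?_
      rw [hratio]
      linarith
  · rintro ⟨P, hP, hEMD, hcost⟩
    have hχ : Function.Surjective χ := fun v => by
      obtain ⟨i, hi⟩ := card_pos.1 ((hfib ⟨0, hm⟩ v).symm ▸ Nat.one_pos)
      exact ⟨i, (mem_filter.1 hi).2⟩
    have hlarge (B : Finset (Fin n')) (hB : B ∈ P) (hitems : B ⊆ itemRows hle univ) : k ≤ #B :=
      le_card_of_EMD_le hχ (hP.1 B hB) hitems ((hEMD B hB).trans_eq hthreshold.symm)
    exact ⟨_, isExactCover_of_partCost_le hk he hinj hP hlarge hm hcost⟩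

end Equivalence

end Reduction

theorem stmt12_general {k n m n' : ℕ} (hk : 2 ≤ k) (hm : 1 ≤ m)
    {t : ℝ} (ht₁ : 1 / 4 ≤ t) (ht₂ : t < 1 / 2) (hn' : (n' : ℝ) = k * n / (1 - 2 * t))
    {χ : Fin (k * n) → Fin k} {e : Fin m → Finset (Fin (k * n))} (hinj : Function.Injective e)
    (hfib : ∀ j v, #{i ∈ e j | χ i = v} = 1) :
    (∃ M : Finset (Fin m), #M = n ∧ M.biUnion e = univ) ↔
      ∃ P : Finset (Finset (Fin n')), IsRowPartition P ∧
        (∀ B ∈ P, EMD (starDist k) (SAdist (itemSA n' χ) B) (SAdist (itemSA n' χ) univ) ≤ t) ∧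
        partCost (coverTable n' e) P ≤ k * n * (m - 1) := by
  have he (j : Fin m) : #(e j) = k := card_eq_of_card_fiber_eq_one (hfib j)
  have hpos : 0 < k * n := by
    have hcard := card_le_univ (e ⟨0, hm⟩)
    rw [he, Fintype.card_fin] at hcard
    omega
  rw [← Nat.cast_mul] at hn'
  have hle : k * n ≤ n' := by
    have : ((k * n : ℕ) : ℝ) ≤ n' :=
      hn' ▸ le_div_self (Nat.cast_nonneg _) (by linarith) (by linarith)
    exact_mod_cast this
  have hratio : ((k * n : ℕ) : ℝ) / n' = 1 - 2 * t := by
    rw [hn', div_div_cancel₀ (by exact_mod_cast hpos.ne')]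
  simp only [← isExactCover_iff_card_eq (by omega : 0 < k) (Fintype.card_fin _) he]
  exact exists_isExactCover_iff hle hratio ht₁ hk hm hinj hfib

theorem stmt12 (n m n' : ℕ) (hn : 1 ≤ n) (hm : 1 ≤ m)
    (t : ℚ) (ht1 : 1 / 3 ≤ t) (ht2 : t < 1 / 2)
    (hn' : (n' : ℚ) = 3 * (n : ℚ) / (1 - 2 * t))
    (χ : Fin (3 * n) → Fin 3)
    (hχ : ∀ v : Fin 3, (Finset.univ.filter (fun i => χ i = v)).card = n)
    (e : Fin m → Finset (Fin (3 * n))) (hinj : Function.Injective e)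
    (he3 : ∀ j, (e j).card = 3)
    (hfib : ∀ j, ∀ v : Fin 3, ((e j).filter (fun i => χ i = v)).card = 1) :
    (∃ M : Finset (Fin m), M.card = n ∧ M.biUnion e = Finset.univ) ↔
    (∃ P : Finset (Finset (Fin n')), IsRowPartition P ∧
      (∀ B ∈ P,
        EMD d4
          (SAdist (fun i : Fin n' =>
            if h : (i : ℕ) < 3 * n then Fin.castSucc (χ ⟨(i : ℕ), h⟩) else 3) B)
          (SAdist (fun i : Fin n' =>
            if h : (i : ℕ) < 3 * n then Fin.castSucc (χ ⟨(i : ℕ), h⟩) else 3)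
            Finset.univ) ≤ (t : ℝ)) ∧
      partCost
        (fun (i : Fin n') (j : Fin m) =>
          if h : (i : ℕ) < 3 * n then
            (if (⟨(i : ℕ), h⟩ : Fin (3 * n)) ∈ e j then 0 else (i : ℕ) + 1)
          else (i : ℕ) + 1) P ≤ 3 * n * (m - 1)) := by
  have ht₁ : (1 / 4 : ℝ) ≤ t := by simpa using Rat.cast_le (K := ℝ).2 (by linarith : 1 / 4 ≤ t)
  have ht₂ : (t : ℝ) < 1 / 2 := by simpa using Rat.cast_lt (K := ℝ).2 ht2
  exact stmt12_general (by norm_num) hm ht₁ ht₂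
    (by exact_mod_cast congrArg ((↑) : ℚ → ℝ) hn') hinj hfib
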